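/- Let N ≥ 1 be an integer, γ > 0 a real number, and t > 0 a real number satisfying γ/t > 2γ(N−1) + 1. Define W_γ(N,t) as the ratio (∫_{ℝ^N} ∏_{1≤i<j≤N} |λ_j − λ_i|^{2γ} · ∏_{j=1}^N e^{−iγλ_j/√t} (1 − i√t·λ_j)^{−γ/t} dλ) / (∫_{ℝ^N} ∏_{1≤i<j≤N} |λ_j − λ_i|^{2γ} · e^{−(γ/2)Σ_{j=1}^N λ_j²} dλ). Then W_γ(N,t) = ( √(2π) · e^{−γ/t} · (γ/t)^{γ/t − ((N−1)γ+1)/2} )^N · ∏_{j=0}^{N−1} 1/Γ(γ/t − γj). -/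

import Mathlib

open MeasureTheory

/-- `W_γ(N,t)`: the ratio of the Mehta-type integral
`∫_{ℝ^N} ∏_{i<j} |λ_j - λ_i|^{2γ} ∏_j e^{-iγλ_j/√t} (1 - i√t λ_j)^{-γ/t} dλ`
to the Gaussian integral
`∫_{ℝ^N} ∏_{i<j} |λ_j - λ_i|^{2γ} e^{-(γ/2)∑_j λ_j²} dλ`. -/
noncomputable def W (γ : ℝ) (N : ℕ) (t : ℝ) : ℂ :=
    (∫ l : Fin N → ℝ,
        (∏ i : Fin N, ∏ j ∈ Finset.Ioi i, ((|l j - l i| ^ (2 * γ) : ℝ) : ℂ)) *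
          ∏ j : Fin N,
            Complex.exp (-(Complex.I * γ * (l j) / Real.sqrt t)) *
              (1 - Complex.I * Real.sqrt t * (l j)) ^ ((-(γ / t) : ℝ) : ℂ)) /
      ((∫ l : Fin N → ℝ,
          (∏ i : Fin N, ∏ j ∈ Finset.Ioi i, |l j - l i| ^ (2 * γ)) *
            Real.exp (-(γ / 2) * ∑ j, (l j) ^ 2) : ℝ) : ℂ)

/-! With `b = γ / t`, a dilation turns the numerator of `W` into a multiple of the integral `J(b)`
of `|V(u)|^(2γ) ∏ z_j^(-b) e^(z_j)` over the vertical lines `z_j = c - i u_j`, where Hankel's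
integrand for `1 / Γ(b)` takes the place of the Gaussian. This integral does not depend on `c > 0`.

Allow different exponents `b_j ∈ {a, a + 1}` and integrate by parts in a variable `k` of exponent
`a`: the interaction terms with `b_j = a` cancel under the exchange of `u_j` and `u_k`, while each
`j` with `b_j = a + 1` contributes `-γ`. Raising the exponents one at a time therefore gives
`J(a) = ∏_{l < N} (a - γ l) · J(a + 1)`, so that `J(b) ∏_{l < N} Γ(b - γ l)` is constant along
`b ∈ a + ℕ`. The constant is its limit as `b → ∞`: around the saddle point `z_j = b` the kernels
become Gaussian, producing the denominator of `W`, and Stirling's formula gives the rest. -/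

open Filter Topology
open Complex (I slitPlane)

section Weight

variable {ι : Type*} [Fintype ι] [DecidableEq ι] {γ ε : ℝ}

/-- The interaction `∏_{i ≠ j} ((u j - u i)² + ε)^(γ/2)`, over ordered pairs. At `ε = 0` it is
`|V(u)|^(2γ)`; for `ε > 0` it is a smooth regularisation, with which one can integrate by parts
also when `2γ < 1`. -/
noncomputable def vandermondeWeight (γ ε : ℝ) (u : ι → ℝ) : ℝ :=
  ∏ i, ∏ j ∈ {i}ᶜ, ((u j - u i) ^ 2 + ε) ^ (γ / 2)

/-- The odd function `x / (x² + ε)`, a regularisation of `1 / x` in terms of which the logarithmic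
derivative of `vandermondeWeight γ ε` is expressed. -/
noncomputable def regularizedInv (ε x : ℝ) : ℝ := x / (x ^ 2 + ε)

lemma vandermondeWeight_zero_eq_prod_Ioi {N : ℕ} (γ : ℝ) (u : Fin N → ℝ) :
    vandermondeWeight γ 0 u = ∏ i, ∏ j ∈ Finset.Ioi i, |u j - u i| ^ (2 * γ) := by
  unfold vandermondeWeight
  rw [← Finset.prod_prod_Ioi_mul_eq_prod_prod_off_diag
    fun j i => ((u j - u i) ^ 2 + 0) ^ (γ / 2)]
  refine Finset.prod_congr rfl fun i _ => Finset.prod_congr rfl fun j _ => ?_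
  have hsq (x : ℝ) : (x ^ 2 + 0) ^ (γ / 2) = |x| ^ γ := by
    rw [add_zero, ← sq_abs, ← Real.rpow_natCast_mul (abs_nonneg x)]
    push_cast
    rw [mul_div_cancel₀ γ two_ne_zero]
  rw [hsq, hsq, abs_sub_comm (u i), ← Real.mul_rpow (abs_nonneg _) (abs_nonneg _), ← sq,
    ← Real.rpow_natCast_mul (abs_nonneg _), Nat.cast_ofNat]

lemma vandermondeWeight_nonneg (γ : ℝ) (hε : 0 ≤ ε) (u : ι → ℝ) : 0 ≤ vandermondeWeight γ ε u :=
  Finset.prod_nonneg fun _ _ => Finset.prod_nonneg fun _ _ => by positivity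

lemma vandermondeWeight_zero_pos_of_injective (γ : ℝ) {u : ι → ℝ} (hu : Function.Injective u) :
    0 < vandermondeWeight γ 0 u := by
  refine Finset.prod_pos fun i _ => Finset.prod_pos fun j hj => Real.rpow_pos_of_pos ?_ _
  have hne : u j - u i ≠ 0 := sub_ne_zero.mpr (hu.ne (by simpa using hj))
  positivity

lemma continuous_vandermondeWeight_uncurry (hγ : 0 ≤ γ) :
    Continuous fun p : ℝ × (ι → ℝ) => vandermondeWeight γ p.1 p.2 := by
  refine continuous_finsetProd _ fun i _ => continuous_finsetProd _ fun j _ => ?_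
  exact Continuous.rpow_const (by fun_prop) fun _ => Or.inr (by positivity)

lemma continuous_vandermondeWeight (hγ : 0 ≤ γ) (ε : ℝ) :
    Continuous (vandermondeWeight γ ε : (ι → ℝ) → ℝ) :=
  (continuous_vandermondeWeight_uncurry hγ).comp (f := fun u : ι → ℝ => (ε, u)) (by fun_prop)

lemma tendsto_vandermondeWeight (hγ : 0 ≤ γ) (u : ι → ℝ) :
    Tendsto (fun ε => vandermondeWeight γ ε u) (𝓝[>] 0) (𝓝 (vandermondeWeight γ 0 u)) :=
  tendsto_nhdsWithin_of_tendsto_nhds <| ((continuous_vandermondeWeight_uncurry hγ).comp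
    (f := fun ε : ℝ => (ε, u)) (by fun_prop)).tendsto 0

lemma vandermondeWeight_comp_perm (γ ε : ℝ) (σ : Equiv.Perm ι) (u : ι → ℝ) :
    vandermondeWeight γ ε (u ∘ σ) = vandermondeWeight γ ε u := by
  unfold vandermondeWeight
  rw [← Equiv.prod_comp σ fun i => ∏ j ∈ {i}ᶜ, ((u j - u i) ^ 2 + ε) ^ (γ / 2)]
  refine Finset.prod_congr rfl fun i _ => Finset.prod_equiv σ (fun j => ?_) fun _ _ => rfl
  simp only [Finset.mem_compl, Finset.mem_singleton, σ.injective.eq_iff]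

lemma vandermondeWeight_add_const (γ ε c : ℝ) (u : ι → ℝ) :
    vandermondeWeight γ ε (u + fun _ => c) = vandermondeWeight γ ε u := by
  simp only [vandermondeWeight, Pi.add_apply, add_sub_add_right_eq_sub]

lemma prod_prod_compl_singleton_const (ι : Type*) [Fintype ι] [DecidableEq ι] {c : ℝ}
    (hc : 0 ≤ c) (s : ℝ) :
    ∏ i : ι, ∏ _j ∈ ({i}ᶜ : Finset ι), c ^ s =
      c ^ (s * (Fintype.card ι * (Fintype.card ι - 1))) := by
  cases isEmpty_or_nonempty ι
  · simp
  · simp only [Finset.prod_const, Finset.card_compl, Finset.card_singleton, Finset.card_univ]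
    rw [← pow_mul, ← Real.rpow_mul_natCast hc, mul_comm (Fintype.card ι - 1), Nat.cast_mul,
      Nat.cast_sub Fintype.card_pos, Nat.cast_one]

lemma vandermondeWeight_zero_smul (γ : ℝ) {c : ℝ} (hc : 0 ≤ c) (u : ι → ℝ) :
    vandermondeWeight γ 0 (c • u) =
      c ^ (γ * (Fintype.card ι * (Fintype.card ι - 1))) * vandermondeWeight γ 0 u := by
  rw [← prod_prod_compl_singleton_const ι hc]
  simp only [vandermondeWeight, ← Finset.prod_mul_distrib]
  refine Finset.prod_congr rfl fun i _ => Finset.prod_congr rfl fun j _ => ?_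
  have hpair : ((c • u) j - (c • u) i) ^ 2 + 0 = c ^ 2 * ((u j - u i) ^ 2 + 0) := by
    simp only [Pi.smul_apply, smul_eq_mul]; ring
  rw [hpair, Real.mul_rpow (by positivity) (by positivity), ← Real.rpow_natCast_mul hc,
    Nat.cast_ofNat, mul_div_cancel₀ γ two_ne_zero]

lemma prod_prod_compl_singleton_mul {f : ι → ℝ} (hf : ∀ i, 0 < f i) (s : ℝ) :
    ∏ i, ∏ j ∈ {i}ᶜ, (f j * f i) ^ (s / 2) = ∏ i, f i ^ (s * (Fintype.card ι - 1)) := by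
  have hswap : ∏ i, ∏ j ∈ {i}ᶜ, f j ^ (s / 2) = ∏ i, ∏ _j ∈ {i}ᶜ, f i ^ (s / 2) :=
    Finset.prod_comm' fun x y => by simp [eq_comm]
  simp only [Real.mul_rpow (hf _).le (hf _).le, Finset.prod_mul_distrib]
  rw [hswap, ← Finset.prod_mul_distrib]
  refine Finset.prod_congr rfl fun i _ => ?_
  have : Nonempty ι := ⟨i⟩
  rw [Finset.prod_const, Finset.card_compl, Finset.card_singleton, ← mul_pow,
    ← Real.rpow_add (hf i), add_halves, ← Real.rpow_mul_natCast (hf i).le,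
    Nat.cast_sub Fintype.card_pos, Nat.cast_one]

lemma vandermondeWeight_le (hγ : 0 ≤ γ) (hε : 0 ≤ ε) (hε1 : ε ≤ 1) (u : ι → ℝ) :
    vandermondeWeight γ ε u ≤ ∏ j, (2 * (1 + u j ^ 2)) ^ (γ * (Fintype.card ι - 1)) := by
  rw [← prod_prod_compl_singleton_mul fun j => by positivity]
  refine Finset.prod_le_prod (fun i _ => Finset.prod_nonneg fun j _ => by positivity) fun i _ => ?_
  refine Finset.prod_le_prod (fun j _ => by positivity) fun j _ => ?_
  refine Real.rpow_le_rpow (by positivity) ?_ (by positivity)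
  nlinarith [sq_nonneg (u j + u i), sq_nonneg (u j * u i), sq_nonneg (u j), sq_nonneg (u i)]

lemma regularizedInv_neg (ε x : ℝ) : regularizedInv ε (-x) = -regularizedInv ε x := by
  simp only [regularizedInv, even_two.neg_pow, neg_div]

lemma regularizedInv_mul_self_nonneg (hε : 0 ≤ ε) (x : ℝ) : 0 ≤ regularizedInv ε x * x := by
  rw [regularizedInv, div_mul_eq_mul_div, ← sq]
  positivity

lemma regularizedInv_mul_self_le_one (hε : 0 ≤ ε) (x : ℝ) : regularizedInv ε x * x ≤ 1 := by
  rw [regularizedInv, div_mul_eq_mul_div, ← sq]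
  exact div_le_one_of_le₀ (by linarith) (by positivity)

lemma abs_regularizedInv_le (hε : 0 < ε) (x : ℝ) : |regularizedInv ε x| ≤ 1 + 1 / ε := by
  rw [regularizedInv, abs_div, abs_of_pos (show 0 < x ^ 2 + ε by positivity),
    div_le_iff₀ (by positivity)]
  have hexpand : (1 + 1 / ε) * (x ^ 2 + ε) = x ^ 2 + ε + x ^ 2 / ε + 1 := by
    field_simp
    ring
  have hdiv : 0 ≤ x ^ 2 / ε := by positivity
  nlinarith [sq_abs x, sq_nonneg (|x| - 1)]

lemma continuous_regularizedInv (hε : 0 < ε) : Continuous (regularizedInv ε) :=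
  continuous_id.div (by fun_prop) fun x => by positivity

lemma tendsto_regularizedInv_mul_self {x : ℝ} (hx : x ≠ 0) :
    Tendsto (fun ε => regularizedInv ε x * x) (𝓝[>] 0) (𝓝 1) := by
  have hcont : ContinuousAt (fun ε : ℝ => regularizedInv ε x * x) 0 := by
    refine ContinuousAt.mul (continuousAt_const.div (by fun_prop) ?_) continuousAt_const
    simpa using hx
  convert! hcont.tendsto.mono_left nhdsWithin_le_nhds using 2
  rw [regularizedInv]
  field_simp
  simp

lemma hasLineDerivAt_vandermondeWeight (γ : ℝ) (hε : 0 < ε) (u v : ι → ℝ) :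
    HasLineDerivAt ℝ (vandermondeWeight γ ε)
      (vandermondeWeight γ ε u *
        (γ * ∑ i, ∑ j, regularizedInv ε (u j - u i) * (v j - v i))) u v := by
  have hexp (w : ι → ℝ) : vandermondeWeight γ ε w =
      Real.exp (∑ i, ∑ j ∈ {i}ᶜ, Real.log ((w j - w i) ^ 2 + ε) * (γ / 2)) := by
    simp only [vandermondeWeight, Real.exp_sum]
    refine Finset.prod_congr rfl fun i _ => Finset.prod_congr rfl fun j _ => ?_
    rw [Real.rpow_def_of_pos (by positivity)]
  have hpair (i j : ι) : HasDerivAt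
      (fun t : ℝ => Real.log (((u + t • v) j - (u + t • v) i) ^ 2 + ε) * (γ / 2))
      (γ * (regularizedInv ε (u j - u i) * (v j - v i))) 0 := by
    have hdiff : HasDerivAt (fun t : ℝ => (u + t • v) j - (u + t • v) i) (v j - v i) 0 := by
      simpa [sub_mul, mul_sub, sub_sub_eq_add_sub, add_sub_add_comm] using
        ((hasDerivAt_id (0 : ℝ)).mul_const (v j - v i)).const_add (u j - u i)
    have hne : ((u + (0 : ℝ) • v) j - (u + (0 : ℝ) • v) i) ^ 2 + ε ≠ 0 := by positivity
    convert! (((hdiff.pow 2).add_const ε).log hne).mul_const (γ / 2) using 1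
    simp only [regularizedInv, Pi.pow_apply, zero_smul, add_zero, Nat.cast_ofNat,
      Nat.add_one_sub_one, pow_one]
    field_simp
  have hlog := HasDerivAt.fun_sum (u := Finset.univ) fun i _ =>
    HasDerivAt.fun_sum (u := ({i}ᶜ : Finset ι)) fun j _ => hpair i j
  rw [HasLineDerivAt, funext hexp]
  convert! hlog.exp using 2
  · simp
  · rw [Finset.mul_sum]
    refine Finset.sum_congr rfl fun i _ => ?_
    rw [Finset.mul_sum, ← Finset.sum_compl_add_sum {i}]
    simp

lemma hasLineDerivAt_vandermondeWeight_single (γ : ℝ) (hε : 0 < ε) (u : ι → ℝ) (k : ι) :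
    HasLineDerivAt ℝ (vandermondeWeight γ ε)
      (vandermondeWeight γ ε u * (2 * γ * ∑ j, regularizedInv ε (u k - u j))) u
      (Pi.single k 1) := by
  convert! hasLineDerivAt_vandermondeWeight γ hε u (Pi.single k 1) using 2
  have hodd (i j : ι) : regularizedInv ε (u j - u i) = -regularizedInv ε (u i - u j) := by
    rw [← regularizedInv_neg, neg_sub]
  simp only [mul_sub, Finset.sum_sub_distrib, Pi.single_apply, mul_ite, mul_one, mul_zero,
    Finset.sum_ite_eq', Finset.mem_univ, if_true, Finset.sum_ite_irrel, Finset.sum_const_zero]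
  simp only [hodd k, Finset.sum_neg_distrib]
  ring

end Weight

section Envelope

variable {ι : Type*} [Fintype ι] {γ ε : ℝ} {b K : ι → ℝ}

/-- The product function dominating `vandermondeWeight γ ε u * ∏ j, e j` for all `ε ∈ [0, 1]`,
when each factor satisfies `‖e j‖ ≤ K j (1 + (u j)²)^(-b j / 2)`. -/
noncomputable def envelope (γ : ℝ) (b K : ι → ℝ) (u : ι → ℝ) : ℝ :=
  ∏ j, (2 * (1 + u j ^ 2)) ^ (γ * (Fintype.card ι - 1)) * (K j * (1 + u j ^ 2) ^ (-b j / 2))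

lemma exponent_pos (hγ : 0 ≤ γ) {a : ℝ} [Nonempty ι]
    (ha : 2 * γ * (Fintype.card ι - 1) + 1 < a) : 0 < a := by
  have hcard : (1 : ℝ) ≤ Fintype.card ι := by exact_mod_cast Fintype.card_pos (α := ι)
  nlinarith

lemma integrable_envelope (K : ι → ℝ) (hb : ∀ j, 2 * γ * (Fintype.card ι - 1) + 1 < b j) :
    Integrable (envelope γ b K) := by
  refine Integrable.fintype_prod (f := fun j x => (2 * (1 + x ^ 2)) ^ (γ * (Fintype.card ι - 1)) *
    (K j * (1 + x ^ 2) ^ (-b j / 2))) fun j => ?_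
  have hdecay : Integrable fun x : ℝ => (1 + ‖x‖ ^ 2) ^
      (-(b j - 2 * γ * (Fintype.card ι - 1)) / 2) :=
    integrable_rpow_neg_one_add_norm_sq (by simpa using by linarith [hb j])
  convert! hdecay.const_mul (2 ^ (γ * (Fintype.card ι - 1)) * K j) using 2 with x
  have hpos : 0 < 1 + x ^ 2 := by positivity
  rw [Real.norm_eq_abs, sq_abs, Real.mul_rpow zero_le_two hpos.le, mul_mul_mul_comm,
    ← Real.rpow_add hpos]
  ring_nf

variable [DecidableEq ι]

lemma norm_vandermondeWeight_mul_prod_le (hγ : 0 ≤ γ) (hε : 0 ≤ ε) (hε1 : ε ≤ 1) {e : ι → ℂ}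
    {u : ι → ℝ} (he : ∀ j, ‖e j‖ ≤ K j * (1 + u j ^ 2) ^ (-b j / 2)) :
    ‖(vandermondeWeight γ ε u : ℂ) * ∏ j, e j‖ ≤ envelope γ b K u := by
  rw [norm_mul, norm_prod, Complex.norm_real,
    Real.norm_of_nonneg (vandermondeWeight_nonneg γ hε u), envelope, Finset.prod_mul_distrib]
  exact mul_le_mul (vandermondeWeight_le hγ hε hε1 u)
    (Finset.prod_le_prod (fun _ _ => norm_nonneg _) fun j _ => he j)
    (Finset.prod_nonneg fun _ _ => norm_nonneg _) (Finset.prod_nonneg fun _ _ => by positivity)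

lemma integrable_vandermondeWeight_mul_prod (hγ : 0 ≤ γ) (hε : 0 ≤ ε) (hε1 : ε ≤ 1)
    (hb : ∀ j, 2 * γ * (Fintype.card ι - 1) + 1 < b j) {e : ι → ℝ → ℂ}
    (hcont : ∀ j, Continuous (e j)) (he : ∀ j x, ‖e j x‖ ≤ K j * (1 + x ^ 2) ^ (-b j / 2)) :
    Integrable fun u : ι → ℝ => (vandermondeWeight γ ε u : ℂ) * ∏ j, e j (u j) := by
  have hw := continuous_vandermondeWeight (ι := ι) hγ ε
  refine (integrable_envelope K hb).mono' (Continuous.aestronglyMeasurable (by fun_prop)) ?_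
  exact .of_forall fun u => norm_vandermondeWeight_mul_prod_le hγ hε hε1 fun j => he j (u j)

end Envelope

section LaplaceKernel

/-- The integrand `z^(-b) e^z` of Hankel's formula for `1 / Γ(b)`. -/
noncomputable def laplaceKernel (b : ℝ) (z : ℂ) : ℂ := z ^ ((-b : ℝ) : ℂ) * Complex.exp z

lemma sub_I_mul_mem_slitPlane {c : ℝ} (hc : 0 < c) (x : ℝ) : (c : ℂ) - I * x ∈ slitPlane :=
  Or.inl (by simpa using hc)

lemma normSq_sub_I_mul (c x : ℝ) : ‖(c : ℂ) - I * x‖ ^ 2 = c ^ 2 + x ^ 2 := by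
  rw [← Complex.normSq_eq_norm_sq, Complex.normSq_apply]
  simp [sq]

lemma norm_sub_I_mul_rpow (b c x : ℝ) :
    ‖(c : ℂ) - I * x‖ ^ (-b) = (c ^ 2 + x ^ 2) ^ (-b / 2) := by
  rw [← normSq_sub_I_mul, ← Real.rpow_natCast_mul (norm_nonneg _), Nat.cast_ofNat,
    mul_div_cancel₀ _ two_ne_zero]

lemma continuous_laplaceKernel_sub_I_mul (b : ℝ) {c : ℝ} (hc : 0 < c) :
    Continuous fun x : ℝ => laplaceKernel b (c - I * x) :=
  (Continuous.cpow (by fun_prop) continuous_const (sub_I_mul_mem_slitPlane hc)).mul (by fun_prop)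

lemma exists_norm_laplaceKernel_le {b r : ℝ} (R : ℝ) (hb : 0 ≤ b) (hr : 0 < r) :
    ∃ K, ∀ c ∈ Set.Icc r R, ∀ x : ℝ,
      ‖laplaceKernel b (c - I * x)‖ ≤ K * (1 + x ^ 2) ^ (-b / 2) := by
  set m := r ^ 2 / (1 + r ^ 2) with hm
  refine ⟨m ^ (-b / 2) * Real.exp R, fun c hc x => ?_⟩
  have hlower : m * (1 + x ^ 2) ≤ c ^ 2 + x ^ 2 := by
    have hrc : r ^ 2 ≤ c ^ 2 := pow_le_pow_left₀ hr.le hc.1 2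
    rw [hm, div_mul_eq_mul_div, div_le_iff₀ (by positivity)]
    nlinarith [sq_nonneg x, sq_nonneg r, mul_nonneg (sq_nonneg r) (sq_nonneg c)]
  calc ‖laplaceKernel b (c - I * x)‖
      = (c ^ 2 + x ^ 2) ^ (-b / 2) * Real.exp c := by
        rw [laplaceKernel, norm_mul, Complex.norm_cpow_real, norm_sub_I_mul_rpow,
          Complex.norm_exp]
        simp
    _ ≤ (m * (1 + x ^ 2)) ^ (-b / 2) * Real.exp R :=
        mul_le_mul (Real.rpow_le_rpow_of_nonpos (by positivity) hlower (by linarith))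
          (Real.exp_le_exp.mpr hc.2) (Real.exp_nonneg _) (by positivity)
    _ = m ^ (-b / 2) * Real.exp R * (1 + x ^ 2) ^ (-b / 2) := by
        rw [Real.mul_rpow (by positivity) (by positivity), mul_right_comm]

lemma hasDerivAt_laplaceKernel (b : ℝ) {z : ℂ} (hz : z ∈ slitPlane) :
    HasDerivAt (laplaceKernel b) (laplaceKernel b z - b * laplaceKernel (b + 1) z) z := by
  convert! ((hasDerivAt_id z).cpow_const (c := ((-b : ℝ) : ℂ)) hz).mul (Complex.hasDerivAt_exp z)
    using 1
  have hexponent : ((-(b + 1) : ℝ) : ℂ) = ((-b : ℝ) : ℂ) - 1 := by push_cast; ring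
  simp only [laplaceKernel, id, hexponent]
  push_cast
  ring

lemma mul_laplaceKernel_add_one (b : ℝ) {z : ℂ} (hz : z ≠ 0) :
    z * laplaceKernel (b + 1) z = laplaceKernel b z := by
  have hexponent : ((-b : ℝ) : ℂ) = 1 + ((-(b + 1) : ℝ) : ℂ) := by push_cast; ring
  rw [laplaceKernel, laplaceKernel, hexponent, Complex.cpow_add _ _ hz, Complex.cpow_one, mul_assoc]

end LaplaceKernel

section LaplaceProd

variable {ι : Type*}

/-- The point with coordinates `c - i u j`: as `u` ranges over `ℝ^ι`, each coordinate runs through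
the vertical line of abscissa `c`. -/
noncomputable def contourPoint (c : ℝ) (u : ι → ℝ) (j : ι) : ℂ := c - I * u j

lemma contourPoint_mem_slitPlane {c : ℝ} (hc : 0 < c) (u : ι → ℝ) (j : ι) :
    contourPoint c u j ∈ slitPlane :=
  sub_I_mul_mem_slitPlane hc (u j)

variable [Fintype ι]

/-- The product of the kernels `laplaceKernel (b j) (z j)`, with one exponent per variable. -/
noncomputable def laplaceProd (b : ι → ℝ) (z : ι → ℂ) : ℂ := ∏ j, laplaceKernel (b j) (z j)

lemma laplaceProd_comp_perm (b : ι → ℝ) (z : ι → ℂ) (σ : Equiv.Perm ι) :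
    laplaceProd (b ∘ σ) (z ∘ σ) = laplaceProd b z :=
  Equiv.prod_comp σ fun j => laplaceKernel (b j) (z j)

variable [DecidableEq ι]

lemma laplaceProd_update (b : ι → ℝ) (z : ι → ℂ) (k : ι) (β : ℝ) :
    laplaceProd (Function.update b k β) z =
      (∏ j ∈ Finset.univ.erase k, laplaceKernel (b j) (z j)) * laplaceKernel β (z k) := by
  rw [laplaceProd, ← Finset.prod_erase_mul _ _ (Finset.mem_univ k), Function.update_self]
  congr 1
  exact Finset.prod_congr rfl fun j hj => by rw [Function.update_of_ne (Finset.ne_of_mem_erase hj)]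

lemma laplaceProd_eq_prod_erase_mul (b : ι → ℝ) (z : ι → ℂ) (k : ι) :
    laplaceProd b z =
      (∏ j ∈ Finset.univ.erase k, laplaceKernel (b j) (z j)) * laplaceKernel (b k) (z k) :=
  (Finset.prod_erase_mul _ _ (Finset.mem_univ k)).symm

lemma mul_laplaceProd_update_add_one (b : ι → ℝ) {z : ι → ℂ} {k : ι} (hz : z k ≠ 0) :
    z k * laplaceProd (Function.update b k (b k + 1)) z = laplaceProd b z := by
  rw [laplaceProd_update, mul_left_comm, mul_laplaceKernel_add_one _ hz,
    ← laplaceProd_eq_prod_erase_mul]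

lemma hasDerivAt_laplaceProd (b : ι → ℝ) {z : ℝ → ι → ℂ} {z' : ι → ℂ} {t : ℝ}
    (hz : ∀ j, HasDerivAt (fun s => z s j) (z' j) t) (hslit : ∀ j, z t j ∈ slitPlane) :
    HasDerivAt (fun s => laplaceProd b (z s))
      (∑ k, z' k * (laplaceProd b (z t) -
        b k * laplaceProd (Function.update b k (b k + 1)) (z t))) t := by
  convert! HasDerivAt.fun_finsetProd (u := Finset.univ) fun j _ =>
    (hasDerivAt_laplaceKernel (b j) (hslit j)).comp t (hz j) using 1
  refine Finset.sum_congr rfl fun k _ => ?_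
  simp only [laplaceProd_update, laplaceProd_eq_prod_erase_mul b _ k, smul_eq_mul,
    Function.comp_apply]
  ring

end LaplaceProd

section LaplaceIntegral

variable {ι : Type*} [DecidableEq ι] {γ ε c : ℝ} {b : ι → ℝ}

lemma integral_eq_zero_of_hasLineDerivAt {E F : Type*} [NormedAddCommGroup E] [NormedSpace ℝ E]
    [FiniteDimensional ℝ E] [MeasurableSpace E] [BorelSpace E] {μ : Measure E}
    [μ.IsAddHaarMeasure] [NormedAddCommGroup F] [NormedSpace ℝ F] {f f' : E → F} {v : E}
    (hf : Integrable f μ) (hf' : Integrable f' μ) (h : ∀ x, HasLineDerivAt ℝ f (f' x) x v) :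
    ∫ x, f' x ∂μ = 0 := by
  have hparts := integral_bilinear_hasLineDerivAt_right_eq_neg_left_of_integrable (μ := μ)
    (f := fun _ => (1 : ℝ)) (f' := fun _ => 0) (B := ContinuousLinearMap.lsmul ℝ ℝ)
    (by simp) (by simpa using hf') (by simpa using hf)
    (fun x _ => by simpa [HasLineDerivAt] using hasDerivAt_const (0 : ℝ) (1 : ℝ)) (fun x _ => h x)
  simpa using hparts

lemma lt_update_add_one {m : ℝ} (hb : ∀ j, m < b j) (k j : ι) :
    m < Function.update b k (b k + 1) j := by
  rcases eq_or_ne j k with rfl | hjk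
  · rw [Function.update_self]; linarith [hb j]
  · rw [Function.update_of_ne hjk]; exact hb j

variable [Fintype ι]

/-- The integrand of the Mehta-type integral, in which the Gaussian weights are replaced by Hankel
kernels of exponents `b j` on the vertical line of abscissa `c`. -/
noncomputable def laplaceIntegrand (γ ε : ℝ) (b : ι → ℝ) (c : ℝ) (u : ι → ℝ) : ℂ :=
  vandermondeWeight γ ε u * laplaceProd b (contourPoint c u)

/-- The Mehta-type integral with Hankel kernels, regularised by `ε`. It is studied for a vector `b`
of exponents since the recursion raises the exponents one at a time. -/
noncomputable def laplaceIntegral (γ ε : ℝ) (b : ι → ℝ) (c : ℝ) : ℂ :=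
  ∫ u, laplaceIntegrand γ ε b c u

lemma continuous_laplaceIntegrand (hγ : 0 ≤ γ) (ε : ℝ) (b : ι → ℝ) (hc : 0 < c) :
    Continuous (laplaceIntegrand γ ε b c) := by
  have hw := continuous_vandermondeWeight (ι := ι) hγ ε
  have hP : Continuous fun u : ι → ℝ => laplaceProd b (contourPoint c u) :=
    continuous_finsetProd _ fun j _ =>
      (continuous_laplaceKernel_sub_I_mul (b j) hc).comp (continuous_apply j)
  exact (Complex.continuous_ofReal.comp hw).mul hP

lemma exists_norm_laplaceIntegrand_le {r : ℝ} (R : ℝ) (hγ : 0 ≤ γ)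
    (hb : ∀ j, 2 * γ * (Fintype.card ι - 1) + 1 < b j) (hr : 0 < r) :
    ∃ K : ι → ℝ, ∀ ε ∈ Set.Icc (0 : ℝ) 1, ∀ c ∈ Set.Icc r R, ∀ u : ι → ℝ,
      ‖laplaceIntegrand γ ε b c u‖ ≤ envelope γ b K u := by
  choose K hK using fun j : ι =>
    have : Nonempty ι := ⟨j⟩
    exists_norm_laplaceKernel_le R (exponent_pos hγ (hb j)).le hr
  exact ⟨K, fun ε hε c hc u =>
    norm_vandermondeWeight_mul_prod_le hγ hε.1 hε.2 fun j => hK j c hc (u j)⟩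

lemma integrable_laplaceIntegrand (hγ : 0 ≤ γ) (hε : ε ∈ Set.Icc (0 : ℝ) 1)
    (hb : ∀ j, 2 * γ * (Fintype.card ι - 1) + 1 < b j) (hc : 0 < c) :
    Integrable (laplaceIntegrand γ ε b c) := by
  obtain ⟨K, hK⟩ := exists_norm_laplaceIntegrand_le c hγ hb hc
  exact (integrable_envelope K hb).mono'
    (continuous_laplaceIntegrand hγ ε b hc).aestronglyMeasurable
    (.of_forall (hK ε hε c (Set.right_mem_Icc.mpr le_rfl)))

lemma hasDerivAt_laplaceIntegrand_abscissa (γ ε : ℝ) (b : ι → ℝ) (hc : 0 < c) (u : ι → ℝ) :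
    HasDerivAt (fun c => laplaceIntegrand γ ε b c u)
      (∑ k, (laplaceIntegrand γ ε b c u -
        b k * laplaceIntegrand γ ε (Function.update b k (b k + 1)) c u)) c := by
  have hz (j : ι) : HasDerivAt (fun s : ℝ => contourPoint s u j) 1 c :=
    Complex.ofRealCLM.hasDerivAt.sub_const _
  convert! (hasDerivAt_laplaceProd b hz (contourPoint_mem_slitPlane hc u)).const_mul
    (vandermondeWeight γ ε u : ℂ) using 1
  rw [Finset.mul_sum]
  exact Finset.sum_congr rfl fun k _ => by simp only [laplaceIntegrand]; ring

lemma hasLineDerivAt_laplaceProd_contourPoint (b : ι → ℝ) (hc : 0 < c) (u v : ι → ℝ) :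
    HasLineDerivAt ℝ (fun u => laplaceProd b (contourPoint c u))
      (∑ k, -(I * v k) * (laplaceProd b (contourPoint c u) -
        b k * laplaceProd (Function.update b k (b k + 1)) (contourPoint c u))) u v := by
  have hz (j : ι) : HasDerivAt (fun t : ℝ => contourPoint c (u + t • v) j) (-(I * v j)) 0 := by
    have hline : HasDerivAt (fun t : ℝ => u j + t * v j) (v j) 0 := by
      simpa using ((hasDerivAt_id (0 : ℝ)).mul_const (v j)).const_add (u j)
    exact (hline.ofReal_comp.const_mul I).const_sub (c : ℂ)
  simpa only [HasLineDerivAt, zero_smul, add_zero] using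
    hasDerivAt_laplaceProd b hz (contourPoint_mem_slitPlane hc _)

-- Shifting `u` by a real constant amounts to an imaginary shift of the abscissa `c`.
lemma hasLineDerivAt_laplaceIntegrand_one (γ ε : ℝ) (b : ι → ℝ) (hc : 0 < c) (u : ι → ℝ) :
    HasLineDerivAt ℝ (laplaceIntegrand γ ε b c)
      (-I * ∑ k, (laplaceIntegrand γ ε b c u -
        b k * laplaceIntegrand γ ε (Function.update b k (b k + 1)) c u)) u (fun _ => 1) := by
  have hw (t : ℝ) : vandermondeWeight γ ε (u + t • fun _ => 1) = vandermondeWeight γ ε u := by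
    rw [show t • (fun _ : ι => (1 : ℝ)) = fun _ => t by ext; simp, vandermondeWeight_add_const]
  have hP := HasDerivAt.const_mul (vandermondeWeight γ ε u : ℂ)
    (hasLineDerivAt_laplaceProd_contourPoint b hc u fun _ => 1)
  simp only [HasLineDerivAt, laplaceIntegrand, hw]
  convert! hP using 1
  rw [Finset.mul_sum, Finset.mul_sum]
  refine Finset.sum_congr rfl fun k _ => ?_
  push_cast
  ring

lemma integral_laplaceIntegrand_deriv_abscissa (hγ : 0 ≤ γ) (hε : ε ∈ Set.Icc (0 : ℝ) 1)
    (hb : ∀ j, 2 * γ * (Fintype.card ι - 1) + 1 < b j) (hc : 0 < c) :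
    ∫ u, ∑ k, (laplaceIntegrand γ ε b c u -
      b k * laplaceIntegrand γ ε (Function.update b k (b k + 1)) c u) = 0 := by
  have hint : Integrable fun u => ∑ k, (laplaceIntegrand γ ε b c u -
      b k * laplaceIntegrand γ ε (Function.update b k (b k + 1)) c u) :=
    integrable_finsetSum _ fun k _ => (integrable_laplaceIntegrand hγ hε hb hc).sub
      ((integrable_laplaceIntegrand hγ hε (lt_update_add_one hb k) hc).const_mul _)
  have hzero := integral_eq_zero_of_hasLineDerivAt (integrable_laplaceIntegrand hγ hε hb hc)
    (hint.const_mul (-I)) fun u => hasLineDerivAt_laplaceIntegrand_one γ ε b hc u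
  rw [integral_const_mul] at hzero
  exact (mul_eq_zero.mp hzero).resolve_left (neg_ne_zero.mpr Complex.I_ne_zero)

lemma hasDerivAt_laplaceIntegral (hγ : 0 ≤ γ) (hε : ε ∈ Set.Icc (0 : ℝ) 1)
    (hb : ∀ j, 2 * γ * (Fintype.card ι - 1) + 1 < b j) (hc : 0 < c) :
    HasDerivAt (laplaceIntegral γ ε b) 0 c := by
  obtain ⟨K, hK⟩ := exists_norm_laplaceIntegrand_le (2 * c) hγ hb (half_pos hc)
  choose K' hK' using fun k =>
    exists_norm_laplaceIntegrand_le (2 * c) hγ (lt_update_add_one hb k) (half_pos hc)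
  have hball : ∀ x ∈ Set.Ioo (c / 2) (2 * c), 0 < x := fun x hx => (half_pos hc).trans hx.1
  rw [← integral_laplaceIntegrand_deriv_abscissa hγ hε hb hc]
  refine (hasDerivAt_integral_of_dominated_loc_of_deriv_le (s := Set.Ioo (c / 2) (2 * c))
    (F' := fun x u => ∑ k, (laplaceIntegrand γ ε b x u -
      b k * laplaceIntegrand γ ε (Function.update b k (b k + 1)) x u))
    (bound := fun u => ∑ k, (envelope γ b K u +
      ‖(b k : ℂ)‖ * envelope γ (Function.update b k (b k + 1)) (K' k) u))
    (Ioo_mem_nhds (by linarith) (by linarith)) ?_ (integrable_laplaceIntegrand hγ hε hb hc)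
    ?_ ?_ ?_ ?_).2
  · filter_upwards [lt_mem_nhds hc] with x hx
    exact (continuous_laplaceIntegrand hγ ε b hx).aestronglyMeasurable
  · exact (continuous_finsetSum _ fun k _ => (continuous_laplaceIntegrand hγ ε b hc).sub
      (continuous_const.mul (continuous_laplaceIntegrand hγ ε _ hc))).aestronglyMeasurable
  · refine .of_forall fun u x hx => (norm_sum_le _ _).trans (Finset.sum_le_sum fun k _ => ?_)
    refine (norm_sub_le _ _).trans (add_le_add (hK ε hε x (Set.Ioo_subset_Icc_self hx) u) ?_)
    rw [norm_mul]
    exact mul_le_mul_of_nonneg_left (hK' k ε hε x (Set.Ioo_subset_Icc_self hx) u) (norm_nonneg _)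
  · exact integrable_finsetSum _ fun k _ => (integrable_envelope K hb).add
      ((integrable_envelope (K' k) (lt_update_add_one hb k)).const_mul _)
  · exact .of_forall fun u x hx => hasDerivAt_laplaceIntegrand_abscissa γ ε b (hball x hx) u

theorem laplaceIntegral_eq_of_pos {d : ℝ} (hγ : 0 ≤ γ) (hε : ε ∈ Set.Icc (0 : ℝ) 1)
    (hb : ∀ j, 2 * γ * (Fintype.card ι - 1) + 1 < b j) (hc : 0 < c) (hd : 0 < d) :
    laplaceIntegral γ ε b c = laplaceIntegral γ ε b d :=
  isOpen_Ioi.is_const_of_deriv_eq_zero isPreconnected_Ioi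
    (fun _ hx => (hasDerivAt_laplaceIntegral hγ hε hb hx).differentiableAt.differentiableWithinAt)
    (fun _ hx => (hasDerivAt_laplaceIntegral hγ hε hb hx).deriv) hc hd

end LaplaceIntegral

section Recursion

variable {ι : Type*} [Fintype ι] [DecidableEq ι] {γ ε c : ℝ} {b : ι → ℝ}

/-- The integral of `laplaceIntegrand` against `1 / (u k - u j)`, regularised. -/
noncomputable def pairIntegral (γ ε : ℝ) (b : ι → ℝ) (c : ℝ) (k j : ι) : ℂ :=
  ∫ u, (regularizedInv ε (u k - u j) : ℂ) * laplaceIntegrand γ ε b c u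

lemma integrable_regularizedInv_mul_laplaceIntegrand (hγ : 0 ≤ γ) (hε : ε ∈ Set.Ioc (0 : ℝ) 1)
    (hb : ∀ j, 2 * γ * (Fintype.card ι - 1) + 1 < b j) (hc : 0 < c) (k j : ι) :
    Integrable fun u => (regularizedInv ε (u k - u j) : ℂ) * laplaceIntegrand γ ε b c u := by
  have hcont : Continuous fun u : ι → ℝ => (regularizedInv ε (u k - u j) : ℂ) :=
    Complex.continuous_ofReal.comp ((continuous_regularizedInv hε.1).comp (by fun_prop))
  refine (integrable_laplaceIntegrand hγ ⟨hε.1.le, hε.2⟩ hb hc).bdd_mul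
    hcont.aestronglyMeasurable (c := 1 + 1 / ε) (.of_forall fun u => ?_)
  rw [Complex.norm_real, Real.norm_eq_abs]
  exact abs_regularizedInv_le hε.1 _

lemma hasLineDerivAt_laplaceIntegrand_single (γ : ℝ) (hε : 0 < ε) (b : ι → ℝ) (hc : 0 < c)
    (k : ι) (u : ι → ℝ) :
    HasLineDerivAt ℝ (laplaceIntegrand γ ε b c)
      (2 * γ * ∑ j, (regularizedInv ε (u k - u j) : ℂ) * laplaceIntegrand γ ε b c u -
        I * (laplaceIntegrand γ ε b c u -
          b k * laplaceIntegrand γ ε (Function.update b k (b k + 1)) c u)) u (Pi.single k 1) := by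
  have hw := HasDerivAt.ofReal_comp (hasLineDerivAt_vandermondeWeight_single γ hε u k)
  have hP := hasLineDerivAt_laplaceProd_contourPoint b hc u (Pi.single k 1)
  rw [Finset.sum_eq_single k (fun j _ hjk => by simp [hjk]) (by simp), Pi.single_eq_same] at hP
  rw [HasLineDerivAt]
  convert! hw.mul hP using 1
  simp only [laplaceIntegrand, zero_smul, add_zero, ← Finset.sum_mul]
  push_cast
  ring

lemma two_mul_sum_pairIntegral (hγ : 0 ≤ γ) (hε : ε ∈ Set.Ioc (0 : ℝ) 1)
    (hb : ∀ j, 2 * γ * (Fintype.card ι - 1) + 1 < b j) (hc : 0 < c) (k : ι) :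
    2 * γ * ∑ j, pairIntegral γ ε b c k j =
      I * (laplaceIntegral γ ε b c -
        b k * laplaceIntegral γ ε (Function.update b k (b k + 1)) c) := by
  have hε' : ε ∈ Set.Icc (0 : ℝ) 1 := ⟨hε.1.le, hε.2⟩
  have hF := integrable_laplaceIntegrand hγ hε' hb hc
  have hF' := (integrable_laplaceIntegrand hγ hε' (lt_update_add_one hb k) hc).const_mul (b k : ℂ)
  have hpair (j : ι) := integrable_regularizedInv_mul_laplaceIntegrand hγ hε hb hc k j
  have hsum := (integrable_finsetSum Finset.univ fun j _ => hpair j).const_mul (2 * γ : ℂ)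
  have hzero := integral_eq_zero_of_hasLineDerivAt hF (hsum.sub ((hF.sub hF').const_mul I))
    (hasLineDerivAt_laplaceIntegrand_single γ hε.1 b hc k)
  rw [integral_sub' hsum ((hF.sub hF').const_mul I), integral_const_mul, integral_const_mul,
    integral_finsetSum _ fun j _ => hpair j, integral_sub' hF hF', integral_const_mul] at hzero
  exact sub_eq_zero.mp hzero

lemma integral_comp_perm {ι E : Type*} [Fintype ι] [NormedAddCommGroup E] [NormedSpace ℝ E]
    (f : (ι → ℝ) → E) (σ : Equiv.Perm ι) : ∫ u, f (u ∘ σ) = ∫ u, f u := by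
  rw [← (volume_measurePreserving_piCongrLeft (fun _ : ι => ℝ) σ).integral_comp
    (MeasurableEquiv.measurableEmbedding _)]
  congr 1 with u
  congr 1 with i
  exact Equiv.piCongrLeft_apply_apply (fun _ : ι => ℝ) σ u i

lemma laplaceIntegrand_comp_perm (γ ε : ℝ) (b : ι → ℝ) (c : ℝ) (u : ι → ℝ) (σ : Equiv.Perm ι) :
    laplaceIntegrand γ ε (b ∘ σ) c (u ∘ σ) = laplaceIntegrand γ ε b c u := by
  rw [laplaceIntegrand, vandermondeWeight_comp_perm]
  exact congrArg _ (laplaceProd_comp_perm b (contourPoint c u) σ)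

lemma pairIntegral_comp_swap (γ ε : ℝ) (b : ι → ℝ) (c : ℝ) (k j : ι) :
    pairIntegral γ ε (b ∘ Equiv.swap k j) c k j = -pairIntegral γ ε b c k j := by
  rw [pairIntegral, ← integral_comp_perm _ (Equiv.swap k j), pairIntegral, ← integral_neg]
  congr 1 with u
  simp only [laplaceIntegrand_comp_perm, Function.comp_apply, Equiv.swap_apply_left,
    Equiv.swap_apply_right]
  rw [← neg_sub (u k), regularizedInv_neg, Complex.ofReal_neg, neg_mul]

lemma pairIntegral_eq_zero (γ ε c : ℝ) {k j : ι} (hkj : b j = b k) :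
    pairIntegral γ ε b c k j = 0 := by
  have hb : b ∘ Equiv.swap k j = b := by
    ext i
    rw [Function.comp_apply, Equiv.swap_apply_def]
    split_ifs with h1 h2 <;> simp [*]
  have hneg := pairIntegral_comp_swap γ ε b c k j
  rw [hb] at hneg
  exact self_eq_neg.mp hneg

lemma laplaceIntegrand_sub_comp_swap (γ ε : ℝ) (hc : 0 < c) {k j : ι} (hkj : b j = b k + 1)
    (u : ι → ℝ) :
    laplaceIntegrand γ ε b c u - laplaceIntegrand γ ε (b ∘ Equiv.swap k j) c u =
      -I * (u k - u j) * laplaceIntegrand γ ε (Function.update b k (b k + 1)) c u := by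
  have hne (i : ι) : contourPoint c u i ≠ 0 :=
    Complex.slitPlane_ne_zero (contourPoint_mem_slitPlane hc u i)
  have hkj' : k ≠ j := by rintro rfl; linarith
  have hswap : Function.update (b ∘ Equiv.swap k j) j ((b ∘ Equiv.swap k j) j + 1) =
      Function.update b k (b k + 1) := by
    ext i
    rcases eq_or_ne i j with rfl | hij
    · simp [hkj, hkj'.symm]
    · rcases eq_or_ne i k with rfl | hik
      · simp [hkj, hij]
      · simp [hij, hik, Equiv.swap_apply_of_ne_of_ne]
  have hk := mul_laplaceProd_update_add_one b (hne k)
  have hj := mul_laplaceProd_update_add_one (b ∘ Equiv.swap k j) (hne j)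
  rw [hswap] at hj
  simp only [laplaceIntegrand, ← hk, ← hj, contourPoint]
  ring

lemma two_mul_pairIntegral (hγ : 0 ≤ γ) (hε : ε ∈ Set.Ioc (0 : ℝ) 1)
    (hb : ∀ j, 2 * γ * (Fintype.card ι - 1) + 1 < b j) (hc : 0 < c) {k j : ι}
    (hkj : b j = b k + 1) :
    2 * pairIntegral γ ε b c k j =
      -I * ∫ u, ((regularizedInv ε (u k - u j) * (u k - u j) : ℝ) : ℂ) *
        laplaceIntegrand γ ε (Function.update b k (b k + 1)) c u := by
  have hint := integrable_regularizedInv_mul_laplaceIntegrand hγ hε hb hc k j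
  have hint' := integrable_regularizedInv_mul_laplaceIntegrand hγ hε
    (b := b ∘ Equiv.swap k j) (fun i => hb _) hc k j
  calc 2 * pairIntegral γ ε b c k j
      = pairIntegral γ ε b c k j - pairIntegral γ ε (b ∘ Equiv.swap k j) c k j := by
        rw [pairIntegral_comp_swap]; ring
    _ = ∫ u, (regularizedInv ε (u k - u j) : ℂ) * (laplaceIntegrand γ ε b c u -
          laplaceIntegrand γ ε (b ∘ Equiv.swap k j) c u) := by
        simp only [pairIntegral, mul_sub]
        exact (integral_sub hint hint').symm
    _ = _ := by
        rw [← integral_const_mul]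
        congr 1 with u
        rw [laplaceIntegrand_sub_comp_swap γ ε hc hkj]
        push_cast
        ring

lemma vandermondeWeight_zero_eq_zero (hγ : γ ≠ 0) {u : ι → ℝ} {k j : ι} (hkj : k ≠ j)
    (hu : u k = u j) : vandermondeWeight γ 0 u = 0 := by
  refine Finset.prod_eq_zero (Finset.mem_univ j) (Finset.prod_eq_zero (i := k) (by simpa) ?_)
  rw [hu, sub_self, sq, zero_mul, add_zero, Real.zero_rpow (div_ne_zero hγ two_ne_zero)]

lemma tendsto_regularizedInv_mul_vandermondeWeight (hγ : 0 < γ) {k j : ι} (hkj : k ≠ j)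
    (u : ι → ℝ) :
    Tendsto (fun ε => regularizedInv ε (u k - u j) * (u k - u j) * vandermondeWeight γ ε u)
      (𝓝[>] 0) (𝓝 (vandermondeWeight γ 0 u)) := by
  by_cases hu : u k = u j
  · simp [hu, vandermondeWeight_zero_eq_zero hγ.ne' hkj hu]
  · simpa using (tendsto_regularizedInv_mul_self (sub_ne_zero.mpr hu)).mul
      (tendsto_vandermondeWeight hγ.le u)

lemma tendsto_integral_mul_laplaceIntegrand (hγ : 0 ≤ γ)
    (hb : ∀ j, 2 * γ * (Fintype.card ι - 1) + 1 < b j) (hc : 0 < c) {p : ℝ → (ι → ℝ) → ℝ}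
    (hp : ∀ ε, 0 < ε → Continuous (p ε)) (hp1 : ∀ ε, 0 < ε → ∀ u, |p ε u| ≤ 1)
    (hlim : ∀ u, Tendsto (fun ε => p ε u * vandermondeWeight γ ε u) (𝓝[>] 0)
      (𝓝 (vandermondeWeight γ 0 u))) :
    Tendsto (fun ε => ∫ u, (p ε u : ℂ) * laplaceIntegrand γ ε b c u) (𝓝[>] 0)
      (𝓝 (laplaceIntegral γ 0 b c)) := by
  obtain ⟨K, hK⟩ := exists_norm_laplaceIntegrand_le c hγ hb hc
  refine tendsto_integral_filter_of_dominated_convergence (envelope γ b K) ?_ ?_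
    (integrable_envelope K hb) (.of_forall fun u => ?_)
  · filter_upwards [self_mem_nhdsWithin] with ε hε
    exact ((Complex.continuous_ofReal.comp (hp ε hε)).mul
      (continuous_laplaceIntegrand hγ ε b hc)).aestronglyMeasurable
  · filter_upwards [Ioc_mem_nhdsGT zero_lt_one] with ε hε
    refine .of_forall fun u => ?_
    rw [norm_mul, Complex.norm_real, Real.norm_eq_abs]
    exact (mul_le_of_le_one_left (norm_nonneg _) (hp1 ε hε.1 u)).trans
      (hK ε ⟨hε.1.le, hε.2⟩ c ⟨le_rfl, le_rfl⟩ u)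
  · refine (((Complex.continuous_ofReal.tendsto _).comp (hlim u)).mul_const _).congr fun ε => ?_
    simp only [laplaceIntegrand, Function.comp_apply, Complex.ofReal_mul, mul_assoc]

lemma tendsto_laplaceIntegral (hγ : 0 ≤ γ)
    (hb : ∀ j, 2 * γ * (Fintype.card ι - 1) + 1 < b j) (hc : 0 < c) :
    Tendsto (fun ε => laplaceIntegral γ ε b c) (𝓝[>] 0) (𝓝 (laplaceIntegral γ 0 b c)) := by
  simpa [laplaceIntegral] using tendsto_integral_mul_laplaceIntegrand hγ hb hc
    (p := fun _ _ => 1) (fun _ _ => continuous_const) (fun _ _ _ => by simp)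
    fun u => by simpa using tendsto_vandermondeWeight hγ u

lemma tendsto_two_mul_pairIntegral (hγ : 0 < γ)
    (hb : ∀ j, 2 * γ * (Fintype.card ι - 1) + 1 < b j) (hc : 0 < c) {k j : ι}
    (hkj : b j = b k + 1) :
    Tendsto (fun ε => 2 * pairIntegral γ ε b c k j) (𝓝[>] 0)
      (𝓝 (-I * laplaceIntegral γ 0 (Function.update b k (b k + 1)) c)) := by
  have hne : k ≠ j := by rintro rfl; linarith
  have hcont (ε : ℝ) (hε : 0 < ε) :
      Continuous fun u : ι → ℝ => regularizedInv ε (u k - u j) * (u k - u j) :=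
    ((continuous_regularizedInv hε).comp (by fun_prop)).mul (by fun_prop)
  have hle (ε : ℝ) (hε : 0 < ε) (u : ι → ℝ) :
      |regularizedInv ε (u k - u j) * (u k - u j)| ≤ 1 := by
    rw [abs_of_nonneg (regularizedInv_mul_self_nonneg hε.le _)]
    exact regularizedInv_mul_self_le_one hε.le _
  refine ((tendsto_integral_mul_laplaceIntegrand hγ.le (lt_update_add_one hb k) hc hcont hle
    (tendsto_regularizedInv_mul_vandermondeWeight hγ hne)).const_mul (-I)).congr' ?_
  filter_upwards [Ioc_mem_nhdsGT zero_lt_one] with ε hε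
  exact (two_mul_pairIntegral hγ.le hε hb hc hkj).symm

theorem laplaceIntegral_eq_mul_update (hγ : 0 < γ)
    (hb : ∀ j, 2 * γ * (Fintype.card ι - 1) + 1 < b j) (hc : 0 < c) {k : ι}
    (hk : ∀ j, b j = b k ∨ b j = b k + 1) :
    laplaceIntegral γ 0 b c = (b k - γ * (Finset.univ.filter fun j => b j = b k + 1).card) *
      laplaceIntegral γ 0 (Function.update b k (b k + 1)) c := by
  set J := laplaceIntegral γ 0 (Function.update b k (b k + 1)) c
  have hpair (j : ι) : Tendsto (fun ε => 2 * pairIntegral γ ε b c k j) (𝓝[>] 0)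
      (𝓝 (if b j = b k + 1 then -I * J else 0)) := by
    split_ifs with hj
    · exact tendsto_two_mul_pairIntegral hγ hb hc hj
    · simp [pairIntegral_eq_zero γ _ c ((hk j).resolve_right hj)]
  have hsum : Tendsto (fun ε => 2 * γ * ∑ j, pairIntegral γ ε b c k j) (𝓝[>] 0)
      (𝓝 (γ * ((Finset.univ.filter fun j => b j = b k + 1).card * (-I * J)))) := by
    convert! (tendsto_finsetSum Finset.univ fun j _ => hpair j).const_mul (γ : ℂ) using 2
    · rw [← Finset.mul_sum]; ring
    · rw [← Finset.sum_filter, Finset.sum_const, nsmul_eq_mul]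
  have hparts : Tendsto (fun ε => 2 * γ * ∑ j, pairIntegral γ ε b c k j) (𝓝[>] 0)
      (𝓝 (I * (laplaceIntegral γ 0 b c - b k * J))) := by
    refine (((tendsto_laplaceIntegral hγ.le hb hc).sub ((tendsto_laplaceIntegral hγ.le
      (lt_update_add_one hb k) hc).const_mul (b k : ℂ))).const_mul I).congr' ?_
    filter_upwards [Ioc_mem_nhdsGT zero_lt_one] with ε hε
    exact (two_mul_sum_pairIntegral hγ.le hε hb hc k).symm
  have hlim := tendsto_nhds_unique hparts hsum
  linear_combination -I * hlim + (laplaceIntegral γ 0 b c - b k * J +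
    γ * (Finset.univ.filter fun j => b j = b k + 1).card * J) * Complex.I_sq

end Recursion

section RaiseExponent

variable {ι : Type*} [Fintype ι] [DecidableEq ι] {γ a c : ℝ}

lemma laplaceIntegral_const_eq_mul_piecewise (hγ : 0 < γ)
    (ha : 2 * γ * (Fintype.card ι - 1) + 1 < a) (hc : 0 < c) (S : Finset ι) :
    laplaceIntegral γ 0 (fun _ : ι => a) c = ((∏ l ∈ Finset.range S.card, (a - γ * l) : ℝ) : ℂ) *
      laplaceIntegral γ 0 (S.piecewise (fun _ => a + 1) fun _ => a) c := by
  induction S using Finset.induction_on with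
  | empty => simp [Finset.piecewise_empty]
  | insert k S hkS ih =>
    set b : ι → ℝ := S.piecewise (fun _ => a + 1) fun _ => a
    have hbk : b k = a := Finset.piecewise_eq_of_notMem _ _ _ hkS
    have hba (j : ι) : b j = if j ∈ S then a + 1 else a := rfl
    have hraised : (Finset.univ.filter fun j => b j = b k + 1) = S := by
      ext j
      simp [hbk, hba]
    have hlower (j : ι) : 2 * γ * (Fintype.card ι - 1) + 1 < b j := by
      rw [hba]; split_ifs <;> linarith
    rw [ih, laplaceIntegral_eq_mul_update hγ hlower hc (k := k) fun j => by
        rw [hba, hbk]; split_ifs <;> simp,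
      hraised, hbk, Finset.piecewise_insert, Finset.card_insert_of_notMem hkS,
      Finset.prod_range_succ]
    push_cast
    ring

lemma laplaceIntegral_const_eq_prod_mul (hγ : 0 < γ)
    (ha : 2 * γ * (Fintype.card ι - 1) + 1 < a) (hc : 0 < c) :
    laplaceIntegral γ 0 (fun _ : ι => a) c =
      ((∏ l ∈ Finset.range (Fintype.card ι), (a - γ * l) : ℝ) : ℂ) *
        laplaceIntegral γ 0 (fun _ : ι => a + 1) c := by
  rw [laplaceIntegral_const_eq_mul_piecewise hγ ha hc Finset.univ, Finset.piecewise_univ,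
    Finset.card_univ]

lemma exponent_sub_mul_pos {n l : ℕ} (hγ : 0 ≤ γ) (ha : 2 * γ * (n - 1) + 1 < a) (hl : l < n) :
    0 < a - γ * l := by
  have hln : (l : ℝ) ≤ n - 1 := by
    have : (l : ℝ) + 1 ≤ n := by exact_mod_cast hl
    linarith
  nlinarith [(l.cast_nonneg : (0 : ℝ) ≤ l)]

theorem laplaceIntegral_add_nat_mul_prod_Gamma {d : ℝ} (hγ : 0 < γ)
    (ha : 2 * γ * (Fintype.card ι - 1) + 1 < a) (hc : 0 < c) (hd : 0 < d) (m : ℕ) :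
    laplaceIntegral γ 0 (fun _ : ι => a + m) d *
        ((∏ l ∈ Finset.range (Fintype.card ι), Real.Gamma (a + m - γ * l) : ℝ) : ℂ) =
      laplaceIntegral γ 0 (fun _ : ι => a) c *
        ((∏ l ∈ Finset.range (Fintype.card ι), Real.Gamma (a - γ * l) : ℝ) : ℂ) := by
  induction m with
  | zero =>
    rw [Nat.cast_zero, add_zero,
      laplaceIntegral_eq_of_pos hγ.le (Set.left_mem_Icc.mpr zero_le_one) (fun _ => ha) hd hc]
  | succ m ih =>
    have ham : 2 * γ * (Fintype.card ι - 1) + 1 < a + m := by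
      linarith [m.cast_nonneg (α := ℝ)]
    have hGamma : ∏ l ∈ Finset.range (Fintype.card ι), Real.Gamma (a + m + 1 - γ * l) =
        (∏ l ∈ Finset.range (Fintype.card ι), (a + m - γ * l)) *
          ∏ l ∈ Finset.range (Fintype.card ι), Real.Gamma (a + m - γ * l) := by
      rw [← Finset.prod_mul_distrib]
      refine Finset.prod_congr rfl fun l hl => ?_
      rw [← Real.Gamma_add_one (exponent_sub_mul_pos hγ.le ham (Finset.mem_range.mp hl)).ne',
        sub_add_eq_add_sub]
    rw [← ih, laplaceIntegral_const_eq_prod_mul hγ ham hd, Nat.cast_succ, ← add_assoc, hGamma]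
    push_cast
    ring

end RaiseExponent

section SaddleKernel

/-- The kernel `z^(-b) e^(b z)` divided by its value at its critical point `z = 1`. -/
noncomputable def saddleKernel (b : ℝ) (z : ℂ) : ℂ :=
  z ^ ((-b : ℝ) : ℂ) * Complex.exp (b * (z - 1))

lemma laplaceKernel_mul_eq_saddleKernel {b : ℝ} (hb : 0 < b) {z : ℂ} (hz : z ≠ 0) :
    laplaceKernel b (b * z) = ((b ^ (-b) * Real.exp b : ℝ) : ℂ) * saddleKernel b z := by
  have hb' : (b : ℂ) ≠ 0 := Complex.ofReal_ne_zero.mpr hb.ne'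
  have hcpow : ((b : ℂ) * z) ^ ((-b : ℝ) : ℂ) =
      ((b ^ (-b) : ℝ) : ℂ) * z ^ ((-b : ℝ) : ℂ) := by
    rw [Complex.ofReal_cpow hb.le, Complex.cpow_def_of_ne_zero (mul_ne_zero hb' hz),
      Complex.cpow_def_of_ne_zero hb', Complex.cpow_def_of_ne_zero hz,
      Complex.log_ofReal_mul hb hz, ← Complex.exp_add, Complex.ofReal_log hb.le, add_mul]
  have hexp : Complex.exp (b * z) = (Real.exp b : ℂ) * Complex.exp (b * (z - 1)) := by
    rw [Complex.ofReal_exp, ← Complex.exp_add]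
    ring_nf
  rw [laplaceKernel, saddleKernel, hcpow, hexp, Complex.ofReal_mul, mul_mul_mul_comm]

lemma continuous_saddleKernel_sub_I_mul (b s : ℝ) :
    Continuous fun x : ℝ => saddleKernel b ((1 : ℝ) - I * (s * x : ℝ)) :=
  (Continuous.cpow (by fun_prop) continuous_const fun x =>
    sub_I_mul_mem_slitPlane zero_lt_one (s * x)).mul (by fun_prop)

lemma norm_saddleKernel {b : ℝ} (hb : 0 < b) (x : ℝ) :
    ‖saddleKernel b ((1 : ℝ) - I * ((√b)⁻¹ * x : ℝ))‖ = (1 + x ^ 2 / b) ^ (-b / 2) := by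
  rw [saddleKernel, norm_mul, Complex.norm_cpow_real, norm_sub_I_mul_rpow, Complex.norm_exp,
    mul_pow, inv_pow, Real.sq_sqrt hb.le, one_pow, inv_mul_eq_div]
  simp

lemma exists_norm_saddleKernel_le {a : ℝ} (ha : 0 < a) :
    ∃ K, ∀ b, a ≤ b → ∀ x : ℝ,
      ‖saddleKernel b ((1 : ℝ) - I * ((√b)⁻¹ * x : ℝ))‖ ≤ K * (1 + x ^ 2) ^ (-a / 2) := by
  set m := min 1 a⁻¹
  have hm0 : 0 < m := by positivity
  refine ⟨m ^ (-a / 2), fun b hab x => ?_⟩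
  have hb : 0 < b := ha.trans_le hab
  have hlower : m * (1 + x ^ 2) ≤ 1 + x ^ 2 / a := by
    rw [mul_add, mul_one, div_eq_inv_mul]
    gcongr
    exacts [min_le_left _ _, min_le_right _ _]
  have hbernoulli : 1 + x ^ 2 / a ≤ (1 + x ^ 2 / b) ^ (b / a) := by
    refine le_trans (le_of_eq ?_) (one_add_mul_self_le_rpow_one_add
      (neg_one_lt_zero.le.trans (by positivity)) ((one_le_div ha).mpr hab))
    field_simp
  calc ‖saddleKernel b ((1 : ℝ) - I * ((√b)⁻¹ * x : ℝ))‖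
      = ((1 + x ^ 2 / b) ^ (b / a)) ^ (-a / 2) := by
        rw [norm_saddleKernel hb, ← Real.rpow_mul (by positivity)]
        congr 1
        field_simp
    _ ≤ (m * (1 + x ^ 2)) ^ (-a / 2) :=
        Real.rpow_le_rpow_of_nonpos (by positivity) (hlower.trans hbernoulli) (by linarith)
    _ = m ^ (-a / 2) * (1 + x ^ 2) ^ (-a / 2) := Real.mul_rpow hm0.le (by positivity)

lemma tendsto_mul_log_one_add_sub {α : Type*} {l : Filter α} {b z : α → ℂ} {w : ℂ}
    (hz : Tendsto z l (𝓝 0)) (hbz : Tendsto (fun i => b i * z i ^ 2) l (𝓝 w)) :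
    Tendsto (fun i => b i * (Complex.log (1 + z i) - z i)) l (𝓝 (-w / 2)) := by
  have htaylor (ζ : ℂ) : Complex.logTaylor 3 ζ = ζ - ζ ^ 2 / 2 := by
    simp only [Complex.logTaylor, Finset.sum_range_succ, Finset.sum_range_zero]
    norm_num
    ring
  have hremainder : Tendsto
      (fun i => b i * (Complex.log (1 + z i) - Complex.logTaylor 3 (z i))) l (𝓝 0) := by
    have hbound : (fun i => b i * (Complex.log (1 + z i) - Complex.logTaylor 3 (z i))) =O[l]
        fun i => b i * z i ^ 2 * z i := by
      simpa only [mul_assoc, ← pow_succ, Function.comp_def, Nat.reduceAdd] using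
        (Asymptotics.isBigO_refl b l).mul ((Complex.log_sub_logTaylor_isBigO 2).comp_tendsto hz)
    exact hbound.trans_tendsto (by simpa using hbz.mul hz)
  convert! hremainder.sub (hbz.div_const 2) using 2
  · rw [htaylor]; ring
  · ring

lemma tendsto_saddleKernel (x : ℝ) :
    Tendsto (fun b : ℝ => saddleKernel b ((1 : ℝ) - I * ((√b)⁻¹ * x : ℝ))) atTop
      (𝓝 (Real.exp (-x ^ 2 / 2) : ℂ)) := by
  let z : ℝ → ℂ := fun b => -(I * ((√b)⁻¹ * x : ℝ))
  have hz0 : Tendsto z atTop (𝓝 0) := by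
    have hsqrt : Tendsto (fun b => (√b)⁻¹ * x) atTop (𝓝 0) := by
      simpa using (tendsto_inv_atTop_zero.comp Real.tendsto_sqrt_atTop).mul_const x
    simpa [z] using (((Complex.continuous_ofReal.tendsto 0).comp hsqrt).const_mul I).neg
  have hbz : Tendsto (fun b : ℝ => (b : ℂ) * z b ^ 2) atTop (𝓝 (-x ^ 2)) := by
    refine tendsto_const_nhds.congr' ?_
    filter_upwards [eventually_gt_atTop 0] with b hb
    have hsq : (b : ℂ) * ((√b)⁻¹ : ℝ) ^ 2 = 1 := by
      rw [← Complex.ofReal_pow, inv_pow, Real.sq_sqrt hb.le, ← Complex.ofReal_mul,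
        mul_inv_cancel₀ hb.ne', Complex.ofReal_one]
    rw [neg_sq, Complex.ofReal_mul, mul_pow, mul_pow, Complex.I_sq]
    linear_combination (x : ℂ) ^ 2 * hsq
  convert! (tendsto_mul_log_one_add_sub hz0 hbz).neg.cexp using 2 with b
  · have hone : ((1 : ℝ) : ℂ) - I * ((√b)⁻¹ * x : ℝ) = 1 + z b := by
      rw [Complex.ofReal_one, sub_eq_add_neg]
    have hne : 1 + z b ≠ 0 :=
      hone ▸ Complex.slitPlane_ne_zero (sub_I_mul_mem_slitPlane zero_lt_one _)
    rw [saddleKernel, hone, Complex.cpow_def_of_ne_zero hne, ← Complex.exp_add]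
    congr 1
    push_cast
    ring
  · rw [Complex.ofReal_exp]
    congr 1
    push_cast
    ring

end SaddleKernel

section SaddleIntegral

variable {ι : Type*} [Fintype ι] [DecidableEq ι] {γ a : ℝ}

lemma rpow_smul_integral_vandermondeWeight_smul {E : Type*} [NormedAddCommGroup E]
    [NormedSpace ℝ E] (γ : ℝ) {c : ℝ} (hc : 0 < c) (f : (ι → ℝ) → E) :
    c ^ (Fintype.card ι + γ * (Fintype.card ι * (Fintype.card ι - 1)) : ℝ) •
        ∫ u, vandermondeWeight γ 0 u • f (c • u) = ∫ u, vandermondeWeight γ 0 u • f u := by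
  have hscale := Measure.integral_comp_smul_of_nonneg volume
    (fun u : ι → ℝ => vandermondeWeight γ 0 u • f u) c (hR := hc.le)
  simp only [vandermondeWeight_zero_smul γ hc.le, mul_smul, integral_smul,
    Module.finrank_fintype_fun_eq_card] at hscale
  rw [Real.rpow_add hc, mul_smul, hscale, Real.rpow_natCast, smul_inv_smul₀ (by positivity)]

/-- The Gaussian integral of Mehta, over `ℝ^ι` with pair exponent `2γ` and unit variance. -/
noncomputable def mehtaIntegral (ι : Type*) [Fintype ι] [DecidableEq ι] (γ : ℝ) : ℝ :=
  ∫ u : ι → ℝ, vandermondeWeight γ 0 u * ∏ j, Real.exp (-u j ^ 2 / 2)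

/-- The analogue of `mehtaIntegral` with the Gaussian replaced by `saddleKernel b` on the line of
abscissa `1` traversed at speed `s`; at speed `1 / √b` it converges to `mehtaIntegral ι γ`. -/
noncomputable def saddleIntegral (ι : Type*) [Fintype ι] [DecidableEq ι] (γ b s : ℝ) : ℂ :=
  ∫ u : ι → ℝ, (vandermondeWeight γ 0 u : ℂ) * ∏ j, saddleKernel b (contourPoint 1 (s • u) j)

lemma rpow_mul_saddleIntegral_mul (γ b s : ℝ) {c : ℝ} (hc : 0 < c) :
    ((c ^ (Fintype.card ι + γ * (Fintype.card ι * (Fintype.card ι - 1)) : ℝ) : ℝ) : ℂ) *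
      saddleIntegral ι γ b (s * c) = saddleIntegral ι γ b s := by
  simpa only [saddleIntegral, Complex.real_smul, mul_smul] using
    rpow_smul_integral_vandermondeWeight_smul γ hc
      fun u : ι → ℝ => ∏ j, saddleKernel b (contourPoint 1 (s • u) j)

lemma laplaceIntegral_self_eq_mul_saddleIntegral (γ : ℝ) {b : ℝ} (hb : 0 < b) :
    laplaceIntegral γ 0 (fun _ : ι => b) b =
      (((b ^ (-b) * Real.exp b) ^ Fintype.card ι : ℝ) : ℂ) * saddleIntegral ι γ b b⁻¹ := by
  have hpoint (u : ι → ℝ) (j : ι) : contourPoint b u j = b * contourPoint 1 (b⁻¹ • u) j := by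
    have : (b : ℂ) ≠ 0 := Complex.ofReal_ne_zero.mpr hb.ne'
    simp only [contourPoint, Pi.smul_apply, smul_eq_mul]
    push_cast
    field_simp
  rw [saddleIntegral, ← integral_const_mul]
  refine integral_congr_ae (.of_forall fun u => ?_)
  simp only [laplaceIntegrand, laplaceProd, hpoint]
  rw [Finset.prod_congr rfl fun j _ => laplaceKernel_mul_eq_saddleKernel hb
    (Complex.slitPlane_ne_zero (contourPoint_mem_slitPlane zero_lt_one (b⁻¹ • u) j)),
    Finset.prod_mul_distrib, Finset.prod_const, Finset.card_univ, Complex.ofReal_pow]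
  ring

lemma exists_exponent_norm_saddleKernel_le (ι : Type*) [Fintype ι] (hγ : 0 ≤ γ) :
    ∃ a K, 2 * γ * (Fintype.card ι - 1) + 1 < a ∧ ∀ b, a ≤ b → ∀ x : ℝ,
      ‖saddleKernel b ((1 : ℝ) - I * ((√b)⁻¹ * x : ℝ))‖ ≤ K * (1 + x ^ 2) ^ (-a / 2) := by
  obtain ⟨K, hK⟩ := exists_norm_saddleKernel_le (a := 2 * γ * Fintype.card ι + 2) (by positivity)
  exact ⟨_, K, by linarith, hK⟩

lemma tendsto_saddleIntegral (ι : Type*) [Fintype ι] [DecidableEq ι] (hγ : 0 ≤ γ) :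
    Tendsto (fun b => saddleIntegral ι γ b (√b)⁻¹) atTop (𝓝 (mehtaIntegral ι γ : ℂ)) := by
  obtain ⟨a, K, ha, hK⟩ := exists_exponent_norm_saddleKernel_le ι hγ
  have hcont := continuous_vandermondeWeight (ι := ι) hγ 0
  rw [mehtaIntegral, ← integral_complex_ofReal]
  refine tendsto_integral_filter_of_dominated_convergence _ (.of_forall fun b => ?_) ?_
    (integrable_envelope (fun _ => K) fun _ => ha) (.of_forall fun u => ?_)
  · exact ((Complex.continuous_ofReal.comp hcont).mul (continuous_finsetProd _ fun j _ =>
      (continuous_saddleKernel_sub_I_mul b _).comp (continuous_apply j))).aestronglyMeasurable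
  · filter_upwards [eventually_ge_atTop a] with b hb
    exact .of_forall fun u => norm_vandermondeWeight_mul_prod_le hγ le_rfl zero_le_one
      fun j => hK b hb (u j)
  · rw [Complex.ofReal_mul, Complex.ofReal_prod]
    exact (tendsto_finsetProd Finset.univ fun j _ => tendsto_saddleKernel (u j)).const_mul _

lemma integrable_vandermondeWeight_mul_prod_exp (ι : Type*) [Fintype ι] [DecidableEq ι]
    (hγ : 0 ≤ γ) :
    Integrable fun u : ι → ℝ => vandermondeWeight γ 0 u * ∏ j, Real.exp (-u j ^ 2 / 2) := by
  obtain ⟨a, K, ha, hK⟩ := exists_exponent_norm_saddleKernel_le ι hγ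
  have hgauss (x : ℝ) : ‖(Real.exp (-x ^ 2 / 2) : ℂ)‖ ≤ K * (1 + x ^ 2) ^ (-a / 2) := by
    refine le_of_tendsto (tendsto_saddleKernel x).norm ?_
    filter_upwards [eventually_ge_atTop a] with b hb using hK b hb x
  have hint := integrable_vandermondeWeight_mul_prod (ι := ι) hγ le_rfl zero_le_one (fun _ => ha)
    (e := fun _ x => (Real.exp (-x ^ 2 / 2) : ℂ)) (fun _ => by fun_prop) fun _ => hgauss
  simpa only [← Complex.ofReal_prod, ← Complex.ofReal_mul, RCLike.re_to_complex,
    Complex.ofReal_re] using hint.re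

lemma mehtaIntegral_pos (ι : Type*) [Fintype ι] [DecidableEq ι] (hγ : 0 ≤ γ) :
    0 < mehtaIntegral ι γ := by
  have hinj : Function.Injective fun i : ι => ((Fintype.equivFin ι i : ℕ) : ℝ) :=
    Nat.cast_injective.comp (Fin.val_injective.comp (Fintype.equivFin ι).injective)
  refine integral_pos_of_integrable_nonneg_nonzero
    ((continuous_vandermondeWeight hγ 0).mul (by fun_prop))
    (integrable_vandermondeWeight_mul_prod_exp ι hγ)
    (fun u => mul_nonneg (vandermondeWeight_nonneg γ le_rfl u) (by positivity))
    (mul_pos (vandermondeWeight_zero_pos_of_injective γ hinj) (by positivity)).ne'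

end SaddleIntegral

section Stirling

lemma Gamma_add_nat_add_one {x : ℝ} (hx : 0 < x) (m : ℕ) :
    Real.Gamma (x + m + 1) = (∏ k ∈ Finset.range (m + 1), (x + k)) * Real.Gamma x := by
  induction m with
  | zero => simp [Real.Gamma_add_one hx.ne']
  | succ m ih =>
    rw [Nat.cast_succ, ← add_assoc, Real.Gamma_add_one (by positivity), ih,
      Finset.prod_range_succ _ (m + 1), Nat.cast_succ]
    ring

lemma tendsto_Gamma_add_nat_div_rpow_mul_factorial {x : ℝ} (hx : 0 < x) :
    Tendsto (fun m : ℕ => Real.Gamma (x + m + 1) / (m ^ x * m.factorial)) atTop (𝓝 1) := by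
  have hGamma := (Real.Gamma_pos_of_pos hx).ne'
  have hlim := (tendsto_const_nhds (x := Real.Gamma x)).div (Real.GammaSeq_tendsto_Gamma x) hGamma
  rw [div_self hGamma] at hlim
  refine hlim.congr fun m => ?_
  rw [Gamma_add_nat_add_one hx, Pi.div_apply, Real.GammaSeq, div_div_eq_mul_div, mul_comm]

lemma tendsto_factorial_div_stirling :
    Tendsto (fun m : ℕ => m.factorial / (√(2 * m * Real.pi) * (m / Real.exp 1) ^ m)) atTop
      (𝓝 1) := by
  refine (Asymptotics.isEquivalent_iff_tendsto_one ?_).mp Stirling.factorial_isEquivalent_stirling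
  filter_upwards [eventually_gt_atTop 0] with m hm
  positivity

lemma tendsto_one_add_div_rpow_natCast_add (s p : ℝ) :
    Tendsto (fun m : ℕ => (1 + s / m) ^ (m + p)) atTop (𝓝 (Real.exp s)) := by
  have hbase : Tendsto (fun m : ℕ => 1 + s / m) atTop (𝓝 1) := by
    simpa using (tendsto_const_div_atTop_nhds_zero_nat s).const_add 1
  have hprod := (Real.tendsto_one_add_div_pow_exp s).mul
    (hbase.rpow_const (p := p) (Or.inl one_ne_zero))
  rw [Real.one_rpow, mul_one] at hprod
  refine hprod.congr' ?_
  filter_upwards [hbase.eventually_const_lt zero_lt_one] with m hm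
  rw [Real.rpow_add hm, Real.rpow_natCast]

/-- The quotient of `Γ(b - d)` by the leading term `b^(b - d - 1/2) e^(-b)` of its asymptotic
expansion as `b → ∞`, up to the constant `√(2π)`. -/
noncomputable def stirlingRatio (d b : ℝ) : ℝ :=
  b ^ (d + 1 / 2 - b) * Real.exp b * Real.Gamma (b - d)

lemma stirlingRatio_pos {d b : ℝ} (hb : 0 < b) (hd : 0 < b - d) : 0 < stirlingRatio d b := by
  have := Real.Gamma_pos_of_pos hd
  unfold stirlingRatio
  positivity

lemma stirlingRatio_add_nat_add_one (d : ℝ) {a : ℝ} (ha : 0 < a) {m : ℕ} (hm : 0 < m) :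
    stirlingRatio d (a + m + 1) =
      Real.Gamma (a - d + m + 1) / (m ^ (a - d) * m.factorial) *
        (m.factorial / (√(2 * m * Real.pi) * (m / Real.exp 1) ^ m)) *
        (√(2 * Real.pi) * Real.exp (a + 1)) / (1 + (a + 1) / m) ^ (m + (a - d + 1 / 2)) := by
  have hm' : (0 : ℝ) < m := by exact_mod_cast hm
  have hb : 0 < a + m + 1 := by positivity
  set x := a - d with hx
  have hsqrt : √(2 * m * Real.pi) = √(2 * Real.pi) * (m : ℝ) ^ (1 / 2 : ℝ) := by
    rw [← Real.sqrt_eq_rpow, ← Real.sqrt_mul (by positivity), mul_right_comm]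
  have hexp : Real.exp (a + m + 1) = Real.exp (a + 1) * Real.exp 1 ^ m := by
    rw [← Real.exp_nat_mul, ← Real.exp_add]
    ring_nf
  have hbase : 1 + (a + 1) / m = (a + m + 1) / m := by
    field_simp
    ring
  have hpow : (m : ℝ) ^ (m + (x + 1 / 2)) =
      (m : ℝ) ^ m * ((m : ℝ) ^ x * (m : ℝ) ^ (1 / 2 : ℝ)) := by
    rw [Real.rpow_add hm', Real.rpow_add hm', Real.rpow_natCast]
  have hneg : d + 1 / 2 - (a + m + 1) = -(m + (x + 1 / 2)) := by rw [hx]; ring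
  have hsub : a + m + 1 - d = x + m + 1 := by rw [hx]; ring
  rw [stirlingRatio, hneg, hsub, hexp, hsqrt, hbase, Real.div_rpow hb.le hm'.le, hpow, div_pow,
    Real.rpow_neg hb.le]
  field_simp

lemma tendsto_stirlingRatio {d a : ℝ} (ha : 0 < a) (hd : 0 < a - d) :
    Tendsto (fun m : ℕ => stirlingRatio d (a + m)) atTop (𝓝 √(2 * Real.pi)) := by
  rw [← tendsto_add_atTop_iff_nat 1]
  have hlim := (((tendsto_Gamma_add_nat_div_rpow_mul_factorial hd).mul
    tendsto_factorial_div_stirling).mul_const (√(2 * Real.pi) * Real.exp (a + 1))).div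
    (tendsto_one_add_div_rpow_natCast_add (a + 1) (a - d + 1 / 2)) (Real.exp_pos _).ne'
  rw [one_mul, one_mul, mul_div_cancel_right₀ _ (Real.exp_pos _).ne'] at hlim
  refine hlim.congr' ?_
  filter_upwards [eventually_gt_atTop 0] with m hm
  rw [Nat.cast_succ, ← add_assoc, stirlingRatio_add_nat_add_one d ha hm]
  rfl

end Stirling

section ClosedForm

variable {ι : Type*} [Fintype ι] [DecidableEq ι] {γ a : ℝ}

lemma sqrt_rpow_mul_pow (γ : ℝ) {b : ℝ} (hb : 0 < b) (n : ℕ) :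
    √b ^ (n + γ * (n * (n - 1)) : ℝ) * (b ^ (-b) * Real.exp b) ^ n =
      (b ^ (((n - 1) * γ + 1) / 2 - b) * Real.exp b) ^ n := by
  have hsqrt : √b ^ (n + γ * (n * (n - 1)) : ℝ) = (b ^ (((n - 1) * γ + 1) / 2)) ^ n := by
    rw [Real.sqrt_eq_rpow, ← Real.rpow_mul hb.le, ← Real.rpow_mul_natCast hb.le]
    ring_nf
  rw [hsqrt, ← mul_pow, ← mul_assoc, ← Real.rpow_add hb, ← sub_eq_add_neg]

lemma prod_stirlingRatio (γ : ℝ) {b : ℝ} (hb : 0 < b) (n : ℕ) :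
    ∏ l ∈ Finset.range n, stirlingRatio (γ * l) b =
      (b ^ (((n - 1) * γ + 1) / 2 - b) * Real.exp b) ^ n *
        ∏ l ∈ Finset.range n, Real.Gamma (b - γ * l) := by
  have hexponents : ∏ l ∈ Finset.range n, b ^ (γ * l + 1 / 2 - b) =
      (b ^ (((n - 1) * γ + 1) / 2 - b)) ^ n := by
    rw [← Real.rpow_mul_natCast hb.le, ← Real.rpow_sum_of_pos hb]
    congr 1
    induction n with
    | zero => simp
    | succ n ih => rw [Finset.sum_range_succ, ih]; push_cast; ring
  simp only [stirlingRatio, Finset.prod_mul_distrib, hexponents, Finset.prod_const,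
    Finset.card_range, mul_pow]

lemma sqrt_two_pi_pow_div_prod_stirlingRatio (γ : ℝ) {b : ℝ} (hb : 0 < b) (n : ℕ) :
    √(2 * Real.pi) ^ n / ∏ l ∈ Finset.range n, stirlingRatio (γ * l) b =
      (√(2 * Real.pi) * Real.exp (-b) * b ^ (b - ((n - 1) * γ + 1) / 2)) ^ n *
        ∏ l ∈ Finset.range n, 1 / Real.Gamma (b - γ * l) := by
  rw [prod_stirlingRatio γ hb, ← neg_sub b, Real.rpow_neg hb.le, Real.exp_neg,
    Finset.prod_div_distrib, Finset.prod_const_one, ← div_div, ← div_pow, mul_one_div]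
  congr 2
  field_simp

lemma laplaceIntegral_self_mul_prod_Gamma (γ : ℝ) {b : ℝ} (hb : 0 < b) :
    laplaceIntegral γ 0 (fun _ : ι => b) b *
        ((∏ l ∈ Finset.range (Fintype.card ι), Real.Gamma (b - γ * l) : ℝ) : ℂ) =
      saddleIntegral ι γ b (√b)⁻¹ *
        ((∏ l ∈ Finset.range (Fintype.card ι), stirlingRatio (γ * l) b : ℝ) : ℂ) := by
  have hspeed : b⁻¹ * √b = (√b)⁻¹ := by
    rw [inv_mul_eq_div, Real.sqrt_div_self', one_div]
  rw [laplaceIntegral_self_eq_mul_saddleIntegral γ hb,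
    ← rpow_mul_saddleIntegral_mul γ b b⁻¹ (Real.sqrt_pos.mpr hb), hspeed, prod_stirlingRatio γ hb,
    ← sqrt_rpow_mul_pow γ hb]
  push_cast
  ring

theorem saddleIntegral_mul_prod_stirlingRatio (hγ : 0 < γ) (ha0 : 0 < a)
    (ha : 2 * γ * (Fintype.card ι - 1) + 1 < a) :
    saddleIntegral ι γ a (√a)⁻¹ *
        ((∏ l ∈ Finset.range (Fintype.card ι), stirlingRatio (γ * l) a : ℝ) : ℂ) =
      mehtaIntegral ι γ * ((√(2 * Real.pi) ^ Fintype.card ι : ℝ) : ℂ) := by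
  have hconst (m : ℕ) : saddleIntegral ι γ (a + m) (√(a + m))⁻¹ *
        ((∏ l ∈ Finset.range (Fintype.card ι), stirlingRatio (γ * l) (a + m) : ℝ) : ℂ) =
      saddleIntegral ι γ a (√a)⁻¹ *
        ((∏ l ∈ Finset.range (Fintype.card ι), stirlingRatio (γ * l) a : ℝ) : ℂ) := by
    have ham : 0 < a + m := by positivity
    rw [← laplaceIntegral_self_mul_prod_Gamma γ ham, ← laplaceIntegral_self_mul_prod_Gamma γ ha0,
      laplaceIntegral_add_nat_mul_prod_Gamma hγ ha ha0 ham]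
  have hstirling : Tendsto
      (fun m : ℕ => ∏ l ∈ Finset.range (Fintype.card ι), stirlingRatio (γ * l) (a + m)) atTop
      (𝓝 (√(2 * Real.pi) ^ Fintype.card ι)) := by
    rw [← Finset.card_range (Fintype.card ι), ← Finset.prod_const, Finset.card_range]
    exact tendsto_finsetProd _ fun l hl => tendsto_stirlingRatio ha0
      (exponent_sub_mul_pos hγ.le ha (Finset.mem_range.mp hl))
  have hsaddle := (tendsto_saddleIntegral ι hγ.le).comp
    (tendsto_atTop_add_const_left atTop a (tendsto_natCast_atTop_atTop (R := ℝ)))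
  exact tendsto_nhds_unique (tendsto_const_nhds.congr fun m => (hconst m).symm)
    (hsaddle.mul ((Complex.continuous_ofReal.tendsto _).comp hstirling))

theorem saddleIntegral_div_mehtaIntegral (hγ : 0 < γ) (ha0 : 0 < a)
    (ha : 2 * γ * (Fintype.card ι - 1) + 1 < a) :
    saddleIntegral ι γ a (√a)⁻¹ / mehtaIntegral ι γ =
      ((√(2 * Real.pi) ^ Fintype.card ι /
        ∏ l ∈ Finset.range (Fintype.card ι), stirlingRatio (γ * l) a : ℝ) : ℂ) := by
  have hprod : 0 < ∏ l ∈ Finset.range (Fintype.card ι), stirlingRatio (γ * l) a :=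
    Finset.prod_pos fun l hl =>
      stirlingRatio_pos ha0 (exponent_sub_mul_pos hγ.le ha (Finset.mem_range.mp hl))
  rw [Complex.ofReal_div,
    div_eq_div_iff (Complex.ofReal_ne_zero.mpr (mehtaIntegral_pos ι hγ.le).ne')
      (Complex.ofReal_ne_zero.mpr hprod.ne'), saddleIntegral_mul_prod_stirlingRatio hγ ha0 ha,
    mul_comm]

end ClosedForm

section Ratio

variable {γ t : ℝ}

lemma integral_numerator_eq_saddleIntegral (N : ℕ) (γ : ℝ) (ht : 0 < t) :
    (∫ l : Fin N → ℝ,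
        (∏ i : Fin N, ∏ j ∈ Finset.Ioi i, ((|l j - l i| ^ (2 * γ) : ℝ) : ℂ)) *
          ∏ j : Fin N,
            Complex.exp (-(I * γ * (l j) / √t)) * (1 - I * √t * (l j)) ^ ((-(γ / t) : ℝ) : ℂ)) =
      saddleIntegral (Fin N) γ (γ / t) √t := by
  have hkernel (x : ℝ) : Complex.exp (-(I * γ * x / √t)) *
      (1 - I * √t * x) ^ ((-(γ / t) : ℝ) : ℂ) =
        saddleKernel (γ / t) ((1 : ℝ) - I * (√t * x : ℝ)) := by
    have hpoint : ((1 : ℝ) : ℂ) - I * (√t * x : ℝ) = 1 - I * √t * x := by push_cast; ring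
    have hsqrt : (√t : ℂ) ^ 2 = t := by rw [← Complex.ofReal_pow, Real.sq_sqrt ht.le]
    have hne : (√t : ℂ) ≠ 0 := Complex.ofReal_ne_zero.mpr (Real.sqrt_pos.mpr ht).ne'
    rw [saddleKernel, hpoint, mul_comm, Complex.ofReal_div, ← hsqrt]
    congr 2
    field_simp
    ring
  simp only [hkernel, saddleIntegral, vandermondeWeight_zero_eq_prod_Ioi, Complex.ofReal_prod]
  rfl

lemma sqrt_rpow_mul_integral_denominator (N : ℕ) (hγ : 0 < γ) :
    √γ ^ (N + γ * (N * (N - 1)) : ℝ) *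
        (∫ l : Fin N → ℝ, (∏ i : Fin N, ∏ j ∈ Finset.Ioi i, |l j - l i| ^ (2 * γ)) *
          Real.exp (-(γ / 2) * ∑ j, (l j) ^ 2)) =
      mehtaIntegral (Fin N) γ := by
  have hgauss (l : Fin N → ℝ) : ∏ j, Real.exp (-(√γ • l) j ^ 2 / 2) =
      Real.exp (-(γ / 2) * ∑ j, (l j) ^ 2) := by
    rw [← Real.exp_sum, Finset.mul_sum]
    congr 1
    refine Finset.sum_congr rfl fun j _ => ?_
    rw [Pi.smul_apply, smul_eq_mul, mul_pow, Real.sq_sqrt hγ.le]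
    ring
  simp only [← hgauss]
  simpa only [smul_eq_mul, Fintype.card_fin, vandermondeWeight_zero_eq_prod_Ioi,
    mehtaIntegral] using rpow_smul_integral_vandermondeWeight_smul γ (Real.sqrt_pos.mpr hγ)
      fun u : Fin N → ℝ => ∏ j, Real.exp (-u j ^ 2 / 2)

lemma W_eq_saddleIntegral_div_mehtaIntegral (N : ℕ) (hγ : 0 < γ) (ht : 0 < t) :
    W γ N t =
      saddleIntegral (Fin N) γ (γ / t) (√(γ / t))⁻¹ / mehtaIntegral (Fin N) γ := by
  have hsqrt : 0 < √γ := Real.sqrt_pos.mpr hγ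
  have hspeed : (√(γ / t))⁻¹ * √γ = √t := by
    rw [Real.sqrt_div hγ.le, inv_div, div_mul_cancel₀ _ hsqrt.ne']
  have hfactor : ((√γ ^ (N + γ * (N * (N - 1)) : ℝ) : ℝ) : ℂ) ≠ 0 :=
    Complex.ofReal_ne_zero.mpr (by positivity)
  rw [W, integral_numerator_eq_saddleIntegral N γ ht, ← sqrt_rpow_mul_integral_denominator N hγ,
    ← rpow_mul_saddleIntegral_mul γ (γ / t) (√(γ / t))⁻¹ hsqrt, hspeed, Fintype.card_fin,
    Complex.ofReal_mul, mul_div_mul_left _ _ hfactor]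

end Ratio

/-- For `N ≥ 1`, `γ > 0` and `t > 0` with `γ/t > 2γ(N-1) + 1`:
`W_γ(N,t) = (√(2π) e^{-γ/t} (γ/t)^{γ/t - ((N-1)γ+1)/2})^N ∏_{j=0}^{N-1} 1/Γ(γ/t - γj)`. -/
theorem stmt3 (N : ℕ) (hN : 1 ≤ N) (γ t : ℝ) (hγ : 0 < γ) (ht : 0 < t)
    (hconv : 2 * γ * ((N : ℝ) - 1) + 1 < γ / t) :
    W γ N t =
      (((Real.sqrt (2 * Real.pi) * Real.exp (-(γ / t)) *
            (γ / t) ^ (γ / t - (((N : ℝ) - 1) * γ + 1) / 2) : ℝ) : ℂ)) ^ N *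
        ∏ j ∈ Finset.range N, ((1 / Real.Gamma (γ / t - γ * j) : ℝ) : ℂ) := by
  have hclosed := saddleIntegral_div_mehtaIntegral (ι := Fin N) hγ (div_pos hγ ht)
    (by simpa only [Fintype.card_fin] using hconv)
  rw [W_eq_saddleIntegral_div_mehtaIntegral N hγ ht, hclosed, Fintype.card_fin,
    sqrt_two_pi_pow_div_prod_stirlingRatio γ (div_pos hγ ht)]
  push_cast
  rfl
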